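/- arXiv:2206.14159 — 3 statements merged into one kernel-verified Lean document; each statement's English description precedes it below -/
import Mathlib

section
/- Let A and B be the companion matrices of f(x) = (x-1)^6 and g(x) = (x+1)^6 respectively, regarded as elements of GL(6,ℤ). Then the elements t = A⁻¹B and r = A⁻¹BA both have infinite order, the subgroup of GL(6,ℤ) generated by A and B equals the subgroup generated by t and r, and this group is the internal free product of the cyclic subgroups ⟨t⟩ and ⟨r⟩; in particular, the hypergeometric group Γ(α,β) with α = (0,0,0,0,0,0) and β = (1/2,1/2,1/2,1/2,1/2,1/2) is isomorphic to ℤ * ℤ, a free group of rank 2. -/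
open Matrix

/-- The companion matrix of `f(x) = (x-1)^6 = x^6 - 6x^5 + 15x^4 - 20x^3 + 15x^2 - 6x + 1`. -/
def companionF : Matrix (Fin 6) (Fin 6) ℤ :=
  !![0,0,0,0,0,-1; 1,0,0,0,0,6; 0,1,0,0,0,-15; 0,0,1,0,0,20; 0,0,0,1,0,-15; 0,0,0,0,1,6]

/-- The companion matrix of `g(x) = (x+1)^6 = x^6 + 6x^5 + 15x^4 + 20x^3 + 15x^2 + 6x + 1`. -/
def companionG : Matrix (Fin 6) (Fin 6) ℤ :=
  !![0,0,0,0,0,-1; 1,0,0,0,0,-6; 0,1,0,0,0,-15; 0,0,1,0,0,-20; 0,0,0,1,0,-15; 0,0,0,0,1,-6]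

/-!
Encode `v` in `R ^ (d + 1)`, with `d` odd, as the polynomial
`y = (1 - X) ^ d * h ((1 + X) / (1 - X))`, where `h` has coefficient vector `v`. Then `B` acts by
`y ↦ ((1 + X) * y - 2 * y(1)) / (1 - X)`, while `t = A⁻¹ * B` is the transvection
`y ↦ y - 2 * y(1) * (1 - X + X ^ 2 - ⋯ - X ^ d)`, which preserves `y(1)`.

If all coefficients of `y` are positive, then all coefficients of `B y` are negative, and both
families are smaller than `2 * y(1)` in absolute value. Hence, for `m ≠ 0`, the transvection term
dominates: the coefficients of `t ^ m y` alternate in sign, and those of `B (t ^ m y)` have constant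
sign. Substituting `-X` for `X` exchanges `B` and `B⁻¹`, so the same holds when the coefficients
of `B y` alternate. This is a ping-pong configuration for `⟨t⟩` and `⟨B⟩`, and conjugation by `t`
turns the free basis `(t, B)` into `(t, A⁻¹ * B * A)`.
-/

open Polynomial

section FreeGroup

variable {G : Type*} [Group G]

theorem freeGroup_lift_injective_of_zpow_ping_pong {ι α : Type*} [Nontrivial ι] [MulAction G α]
    (a : ι → G) (S : ι → Set α) (hne : ∀ i, (S i).Nonempty)
    (hdisj : Pairwise (Function.onFun Disjoint S))
    (hpp : Pairwise fun i j ↦ ∀ m : ℤ, m ≠ 0 → Set.MapsTo (a i ^ m • ·) (S j) (S i)) :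
    Function.Injective (FreeGroup.lift a) := by
  have hlift : FreeGroup.lift a =
      (Monoid.CoprodI.lift fun i ↦ FreeGroup.lift fun _ : Unit ↦ a i).comp
        (@freeGroupEquivCoprodI ι).toMonoidHom := by
    ext i
    simp
  rw [hlift, MonoidHom.coe_comp]
  refine .comp ?_ (MulEquiv.injective freeGroupEquivCoprodI)
  refine Monoid.CoprodI.lift_injective_of_ping_pong _ ?_ S hne hdisj fun i j hij h hh ↦ ?_
  · have : Infinite (FreeGroup Unit) :=
      .of_injective _ FreeGroup.freeGroupUnitEquivInt.symm.injective
    exact .inr ⟨Classical.arbitrary ι,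
      (Cardinal.natCast_lt_aleph0 (n := 3)).le.trans (Cardinal.aleph0_le_mk _)⟩
  · obtain ⟨m, rfl⟩ := FreeGroup.freeGroupUnitEquivInt.symm.surjective h
    have hm : m ≠ 0 := by
      rintro rfl
      exact hh (by simp [FreeGroup.freeGroupUnitEquivInt])
    simpa [FreeGroup.freeGroupUnitEquivInt] using Set.smul_set_subset_iff.2 (hpp hij m hm)

theorem zpow_smul_mem_or_smul_zpow_smul_mem {α : Type*} [MulAction G α] {b : G} {P Q : Set α}
    (hP : Set.MapsTo (b • ·) P P) (hQ : Set.MapsTo (b⁻¹ • ·) Q Q) {x : α} (hbx : b • x ∈ P)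
    (hx : x ∈ Q) {k : ℤ} (hk : k ≠ 0) : b ^ k • x ∈ P ∨ b • b ^ k • x ∈ Q := by
  rcases hk.lt_or_gt with hk | hk
  · obtain ⟨n, rfl⟩ : ∃ n : ℕ, k = -(n + 1) := ⟨(-k - 1).toNat, by lia⟩
    have hmem := hQ.iterate n hx
    rw [smul_iterate] at hmem
    right
    rwa [smul_smul, ← _root_.zpow_one_add, neg_add_rev, add_neg_cancel_left, _root_.zpow_neg,
      _root_.zpow_natCast, ← inv_pow]
  · obtain ⟨n, rfl⟩ : ∃ n : ℕ, k = n + 1 := ⟨(k - 1).toNat, by lia⟩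
    have hmem := hP.iterate n hbx
    rw [smul_iterate] at hmem
    left
    rwa [_root_.zpow_add_one, mul_smul, _root_.zpow_natCast]

theorem freeGroup_lift_injective_of_mapsTo {α : Type*} [MulAction G α] {t b : G} {P Q : Set α}
    (hne : P.Nonempty) (hPQ : Disjoint P Q) (hP : Set.MapsTo (b • ·) P P)
    (hQ : Set.MapsTo (b⁻¹ • ·) Q Q)
    (ht : ∀ x, x ∈ P ∨ b • x ∈ Q → ∀ m : ℤ, m ≠ 0 → b • t ^ m • x ∈ P ∧ t ^ m • x ∈ Q) :
    Function.Injective (FreeGroup.lift ![t, b]) := by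
  obtain ⟨x₀, hx₀⟩ := hne
  refine freeGroup_lift_injective_of_zpow_ping_pong ![t, b]
    ![{x | b • x ∈ P ∧ x ∈ Q}, {x | x ∈ P ∨ b • x ∈ Q}] ?_ ?_ ?_
  · exact Fin.forall_fin_two.2 ⟨⟨t ^ (1 : ℤ) • x₀, ht x₀ (.inl hx₀) 1 one_ne_zero⟩, x₀, .inl hx₀⟩
  · have hdisj : Disjoint {x | b • x ∈ P ∧ x ∈ Q} {x | x ∈ P ∨ b • x ∈ Q} := by
      rw [Set.disjoint_left]
      rintro x ⟨hbP, hxQ⟩ (hxP | hbQ)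
      · exact hPQ.notMem_of_mem_left hxP hxQ
      · exact hPQ.notMem_of_mem_left hbP hbQ
    intro i j hij
    fin_cases i <;> fin_cases j <;> first | exact absurd rfl hij | exact hdisj | exact hdisj.symm
  · intro i j hij m hm
    fin_cases i <;> fin_cases j
    · exact absurd rfl hij
    · exact fun x hx ↦ ht x hx m hm
    · exact fun x hx ↦ zpow_smul_mem_or_smul_zpow_smul_mem hP hQ hx.1 hx.2 hm
    · exact absurd rfl hij

theorem freeGroup_lift_conj_injective {ι : Type*} {a : ι → G}
    (ha : Function.Injective (FreeGroup.lift a)) (g : G) :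
    Function.Injective (FreeGroup.lift fun i ↦ g * a i * g⁻¹) := by
  have hconj : FreeGroup.lift (fun i ↦ g * a i * g⁻¹) =
      (MulAut.conj g).toMonoidHom.comp (FreeGroup.lift a) := by
    ext i
    simp
  rw [hconj]
  exact (MulAut.conj g).injective.comp ha

theorem not_isOfFinOrder_of_freeGroup_lift_injective {ι : Type*} {a : ι → G}
    (ha : Function.Injective (FreeGroup.lift a)) (i : ι) : ¬ IsOfFinOrder (a i) := by
  rw [← FreeGroup.lift_apply_of (f := a), ha.isOfFinOrder_iff]
  exact not_isOfFinOrder_of_isMulTorsionFree (FreeGroup.of_ne_one i)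

theorem closure_singleton_zpowers_eq_top (g : G) :
    Subgroup.closure {(⟨g, Subgroup.mem_zpowers g⟩ : Subgroup.zpowers g)} = ⊤ := by
  rw [← Subgroup.zpowers_eq_closure, Subgroup.eq_top_iff']
  rintro ⟨_, k, rfl⟩
  exact ⟨k, rfl⟩

theorem closure_pair_coprod_zpowers_eq_top (a b : G) :
    Subgroup.closure
      {(Monoid.Coprod.inl ⟨a, Subgroup.mem_zpowers a⟩ :
        Monoid.Coprod (Subgroup.zpowers a) (Subgroup.zpowers b)),
       Monoid.Coprod.inr ⟨b, Subgroup.mem_zpowers b⟩} = ⊤ := by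
  rw [Set.insert_eq, Subgroup.closure_union, ← Set.image_singleton, ← Set.image_singleton,
    ← MonoidHom.map_closure, ← MonoidHom.map_closure, closure_singleton_zpowers_eq_top,
    closure_singleton_zpowers_eq_top, ← MonoidHom.range_eq_map, ← MonoidHom.range_eq_map,
    Monoid.Coprod.range_inl_sup_range_inr]

theorem coprod_lift_zpowers_injective {a b : G}
    (h : Function.Injective (FreeGroup.lift ![a, b])) :
    Function.Injective (Monoid.Coprod.lift (Subgroup.zpowers a).subtype
      (Subgroup.zpowers b).subtype) := by
  let ψ : FreeGroup (Fin 2) →* Monoid.Coprod (Subgroup.zpowers a) (Subgroup.zpowers b) :=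
    FreeGroup.lift ![.inl ⟨a, Subgroup.mem_zpowers a⟩, .inr ⟨b, Subgroup.mem_zpowers b⟩]
  have hψ : Function.Surjective ψ := by
    rw [← MonoidHom.range_eq_top, FreeGroup.range_lift_eq_closure, range_cons_cons_empty,
      closure_pair_coprod_zpowers_eq_top]
  have hcomp : (Monoid.Coprod.lift (Subgroup.zpowers a).subtype
      (Subgroup.zpowers b).subtype).comp ψ = FreeGroup.lift ![a, b] := by
    ext i
    fin_cases i <;> simp [ψ]
  rw [← hcomp, MonoidHom.coe_comp] at h
  exact h.of_comp_right hψ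

theorem range_coprod_lift_zpowers (a b : G) :
    (Monoid.Coprod.lift (Subgroup.zpowers a).subtype (Subgroup.zpowers b).subtype).range =
      Subgroup.closure {a, b} := by
  rw [Monoid.Coprod.range_lift, Subgroup.range_subtype, Subgroup.range_subtype,
    Subgroup.zpowers_eq_closure, Subgroup.zpowers_eq_closure, ← Subgroup.closure_union,
    Set.singleton_union]

theorem nonempty_closure_pair_mulEquiv_freeGroup {a b : G}
    (h : Function.Injective (FreeGroup.lift ![a, b])) :
    Nonempty (Subgroup.closure {a, b} ≃* FreeGroup (Fin 2)) := by
  rw [← range_cons_cons_empty a b ![], ← FreeGroup.range_lift_eq_closure]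
  exact ⟨(MonoidHom.ofInjective h).symm⟩

theorem closure_pair_eq_closure_inv_mul (a b : G) :
    Subgroup.closure {a, b} = Subgroup.closure {a⁻¹ * b, a⁻¹ * b * a} := by
  apply le_antisymm <;> rw [Subgroup.closure_le, Set.pair_subset_iff]
  · have ht : a⁻¹ * b ∈ Subgroup.closure {a⁻¹ * b, a⁻¹ * b * a} :=
      Subgroup.subset_closure (by simp)
    have ha : a ∈ Subgroup.closure {a⁻¹ * b, a⁻¹ * b * a} :=
      (Subgroup.mul_mem_cancel_left _ ht).1 (Subgroup.subset_closure (by simp))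
    exact ⟨ha, (Subgroup.mul_mem_cancel_left _ (inv_mem ha)).1 ht⟩
  · have ha : a ∈ Subgroup.closure {a, b} := Subgroup.subset_closure (by simp)
    have hb : b ∈ Subgroup.closure {a, b} := Subgroup.subset_closure (by simp)
    have ht := mul_mem (inv_mem ha) hb
    exact ⟨ht, mul_mem ht ha⟩

theorem map_zpow_smul_of_map_smul {α M : Type*} [MulAction G α] [AddCommGroup M] {t : G}
    {f c : α → M} (hf : ∀ x, f (t • x) = f x + c x) (hc : ∀ x, c (t • x) = c x) (m : ℤ) (x : α) :
    f (t ^ m • x) = f x + m • c x := by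
  have hcinv (x : α) : c (t⁻¹ • x) = c x := by rw [← hc, smul_inv_smul]
  have hinv (x : α) : f (t⁻¹ • x) = f x - c x := by
    rw [← smul_inv_smul t x, hf, hc, inv_smul_smul, add_sub_cancel_right]
  induction m using Int.induction_on generalizing x with
  | zero => simp
  | succ k ih => rw [_root_.zpow_add_one, mul_smul, ih, hf, hc]; module
  | pred k ih => rw [_root_.zpow_sub_one, mul_smul, ih, hinv, hcinv]; module

end FreeGroup

section CayleyRel

variable {R : Type*} [CommRing R]

theorem coeff_comp_neg_X (p : R[X]) (k : ℕ) : (p.comp (-X)).coeff k = (-1) ^ k * p.coeff k := by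
  have hX : (-X : R[X]) = C (-1) * X := by simp
  rw [hX, comp_C_mul_X_coeff, mul_comm]

theorem natDegree_comp_neg_X (p : R[X]) : (p.comp (-X)).natDegree = p.natDegree :=
  natDegree_eq_of_degree_eq degree_comp_neg_X

theorem coeff_sub_C_mul_geom_sum {n k : ℕ} (hk : k < n) (p : R[X]) (c : R) :
    (p - C c * ∑ i ∈ Finset.range n, X ^ i).coeff k = p.coeff k - c := by
  simp [finsetSum_coeff, coeff_X_pow, hk]

theorem sub_C_mul_neg_geom_sum_comp_neg_X (n : ℕ) (p : R[X]) (c : R) :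
    (p - C c * ∑ i ∈ Finset.range n, (-X) ^ i).comp (-X) =
      p.comp (-X) - C c * ∑ i ∈ Finset.range n, X ^ i := by
  simp [sum_comp]

theorem eval_one_sub_C_mul_neg_geom_sum {n : ℕ} (hn : Even n) (p : R[X]) (c : R) :
    (p - C c * ∑ i ∈ Finset.range n, (-X) ^ i).eval 1 = p.eval 1 := by
  simp [eval_finsetSum, hn, neg_one_geom_sum]

/-- Multiplication by the Cayley transform `(1 + X) / (1 - X)`, followed by the unique correction of
the numerator by a constant that makes the quotient a polynomial. In the coordinates
`cayleyTransform`, it is the action of the companion matrix of `(X + 1) ^ n`. -/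
def CayleyRel (y w : R[X]) : Prop :=
  (1 - X) * w = (1 + X) * y - C (2 * y.eval 1)

namespace CayleyRel

variable {y w : R[X]}

theorem neg (h : CayleyRel y w) : CayleyRel (-y) (-w) := by
  unfold CayleyRel at h ⊢
  rw [eval_neg, mul_neg (2 : R), C_neg]
  linear_combination -h

theorem two_mul_eval_neg_one (h : CayleyRel y w) : 2 * w.eval (-1) = -(2 * y.eval 1) := by
  have hval := congrArg (eval (-1)) h
  simp only [eval_mul, eval_sub, eval_add, eval_one, eval_X, eval_C] at hval
  linear_combination hval

theorem comp_neg_X (h : CayleyRel y w) : CayleyRel (w.comp (-X)) (y.comp (-X)) := by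
  have hX := congrArg (fun p ↦ p.comp (-X)) h
  simp only [mul_comp, sub_comp, add_comp, one_comp, X_comp, C_comp] at hX
  unfold CayleyRel
  rw [eval_comp, eval_neg, eval_X, h.two_mul_eval_neg_one, C_neg]
  linear_combination -hX

theorem coeff_eq (h : CayleyRel y w) (k : ℕ) :
    w.coeff k = ∑ i ∈ Finset.range k, y.coeff i + ∑ i ∈ Finset.range (k + 1), y.coeff i -
      2 * y.eval 1 := by
  unfold CayleyRel at h
  induction k with
  | zero => simpa [sub_mul, add_mul] using congrArg (coeff · 0) h
  | succ k ih =>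
    have hk : w.coeff (k + 1) - w.coeff k = y.coeff (k + 1) + y.coeff k := by
      simpa only [sub_mul, add_mul, one_mul, coeff_sub, coeff_add, coeff_X_mul, coeff_C_succ,
        sub_zero] using congrArg (coeff · (k + 1)) h
    rw [Finset.sum_range_succ _ (k + 1), Finset.sum_range_succ]
    rw [Finset.sum_range_succ] at ih
    linear_combination hk + ih

theorem eq_sub_geom_sum [IsDomain R] {n : ℕ} (hn : Even n) {w' : R[X]} {c : R}
    (hw : CayleyRel y w)
    (hw' : CayleyRel (y - C c * ∑ i ∈ Finset.range n, (-X) ^ i) w') :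
    w' = w - C c * ∑ i ∈ Finset.range n, X ^ i := by
  have hneg := mul_neg_geom_sum (-X : R[X]) n
  have hpos := mul_neg_geom_sum (X : R[X]) n
  rw [hn.neg_pow] at hneg
  have hne : (1 - X : R[X]) ≠ 0 := sub_ne_zero.2 (X_ne_C (1 : R)).symm
  apply mul_left_cancel₀ hne
  unfold CayleyRel at hw hw'
  rw [eval_one_sub_C_mul_neg_geom_sum hn] at hw'
  linear_combination hw' - hw - C c * hneg + C c * hpos

theorem eq_sub_neg_geom_sum [IsDomain R] {n : ℕ} (hn : Even n) {u : R[X]} (hy : CayleyRel y w)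
    (hu : (1 - X) * w = (1 + X) * u - C (2 * u.eval 1) * X ^ n) :
    u = y - C (2 * y.eval 1) * ∑ i ∈ Finset.range n, (-X) ^ i := by
  have heval : 2 * u.eval 1 = 2 * y.eval 1 := by
    have hval := congrArg (eval (-1)) hu
    simp only [eval_mul, eval_sub, eval_add, eval_pow, eval_one, eval_X, eval_C,
      hn.neg_one_pow] at hval
    linear_combination hval - hy.two_mul_eval_neg_one
  have hneg := mul_neg_geom_sum (-X : R[X]) n
  rw [hn.neg_pow] at hneg
  have hne : (1 + X : R[X]) ≠ 0 := by
    rw [add_comm]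
    exact X_add_C_ne_zero (1 : R)
  apply mul_left_cancel₀ hne
  unfold CayleyRel at hy
  rw [heval] at hu
  linear_combination hy - hu + C (2 * y.eval 1) * hneg

end CayleyRel

end CayleyRel

section HasConstantSign

variable {R : Type*} [CommRing R] [LinearOrder R] {n : ℕ} {p y w : R[X]}

/-- The coefficients of `p` of index less than `n` are nonzero and all have the same sign. -/
def HasConstantSign (n : ℕ) (p : R[X]) : Prop :=
  (∀ k < n, 0 < p.coeff k) ∨ ∀ k < n, p.coeff k < 0

variable [IsStrictOrderedRing R]

theorem HasConstantSign.neg (h : HasConstantSign n p) : HasConstantSign n (-p) := by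
  simpa [HasConstantSign, or_comm] using h

theorem HasConstantSign.not_comp_neg_X (hn : 2 ≤ n) (hp : HasConstantSign n p) :
    ¬ HasConstantSign n (p.comp (-X)) := by
  rintro (h' | h') <;> rcases hp with hp | hp <;>
    have h0 := h' 0 (by lia) <;> have h1 := h' 1 (by lia) <;>
    rw [coeff_comp_neg_X] at h0 h1 <;>
    linarith [hp 0 (by lia), hp 1 (by lia)]

theorem hasConstantSign_sub_geom_sum {c : R} (hp : ∀ k < n, |p.coeff k| < |c|) :
    HasConstantSign n (p - C c * ∑ i ∈ Finset.range n, X ^ i) := by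
  rcases le_or_gt 0 c with hc | hc
  · refine .inr fun k hk ↦ ?_
    rw [coeff_sub_C_mul_geom_sum hk]
    linarith [le_abs_self (p.coeff k), abs_of_nonneg hc, hp k hk]
  · refine .inl fun k hk ↦ ?_
    rw [coeff_sub_C_mul_geom_sum hk]
    linarith [neg_abs_le (p.coeff k), abs_of_neg hc, hp k hk]

theorem hasConstantSign_one_add_X_pow (n : ℕ) : HasConstantSign (n + 1) ((1 + X : R[X]) ^ n) := by
  refine .inl fun k hk ↦ ?_
  rw [coeff_one_add_X_pow]
  exact_mod_cast Nat.choose_pos (Nat.le_of_lt_succ hk)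

namespace CayleyRel

theorem bounds_of_coeff_pos (h : CayleyRel y w) (hdeg : y.natDegree < n)
    (hy : ∀ k < n, 0 < y.coeff k) {k : ℕ} (hk : k < n) :
    y.coeff k < 2 * y.eval 1 ∧ -(2 * y.eval 1) < w.coeff k ∧ w.coeff k < 0 := by
  have hnonneg : 0 ≤ ∑ i ∈ Finset.range k, y.coeff i :=
    Finset.sum_nonneg fun i hi ↦ (hy i ((Finset.mem_range.1 hi).trans hk)).le
  have hle : ∑ i ∈ Finset.range (k + 1), y.coeff i ≤ y.eval 1 := by
    rw [eval_eq_sum_range' hdeg]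
    simp only [one_pow, mul_one]
    exact Finset.sum_le_sum_of_subset_of_nonneg (Finset.range_mono hk)
      fun i hi _ ↦ (hy i (Finset.mem_range.1 hi)).le
  have hpos := hy k hk
  rw [Finset.sum_range_succ] at hle
  rw [h.coeff_eq, Finset.sum_range_succ]
  refine ⟨?_, ?_, ?_⟩ <;> linarith

theorem hasConstantSign (h : CayleyRel y w) (hdeg : y.natDegree < n)
    (hy : HasConstantSign n y) : HasConstantSign n w := by
  wlog hpos : ∀ k < n, 0 < y.coeff k generalizing y w
  · have hw := this h.neg (by rwa [natDegree_neg]) hy.neg (by simpa using hy.resolve_left hpos)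
    simpa using hw.neg
  exact .inr fun k hk ↦ (h.bounds_of_coeff_pos hdeg hpos hk).2.2

theorem abs_coeff_lt (h : CayleyRel y w) (hdeg : y.natDegree < n) (hy : HasConstantSign n y)
    {k : ℕ} (hk : k < n) :
    |y.coeff k| < |2 * y.eval 1| ∧ |w.coeff k| < |2 * y.eval 1| := by
  wlog hpos : ∀ k < n, 0 < y.coeff k generalizing y w
  · simpa using this h.neg (by rwa [natDegree_neg]) hy.neg (by simpa using hy.resolve_left hpos)
  obtain ⟨hyk, hwk, hwk'⟩ := h.bounds_of_coeff_pos hdeg hpos hk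
  exact ⟨(abs_lt.2 ⟨by linarith [hpos k hk], hyk⟩).trans_le (le_abs_self _),
    (abs_lt.2 ⟨hwk, by linarith [hpos k hk]⟩).trans_le (le_abs_self _)⟩

theorem abs_coeff_lt_of_comp_neg_X (h : CayleyRel y w) (hdeg : w.natDegree < n)
    (hw : HasConstantSign n (w.comp (-X))) {k : ℕ} (hk : k < n) :
    |y.coeff k| < |2 * y.eval 1| ∧ |w.coeff k| < |2 * y.eval 1| := by
  have hlt := h.comp_neg_X.abs_coeff_lt (by rwa [natDegree_comp_neg_X]) hw hk
  rw [eval_comp, eval_neg, eval_X, h.two_mul_eval_neg_one, abs_neg] at hlt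
  simpa [coeff_comp_neg_X, abs_mul, and_comm] using hlt

end CayleyRel

end HasConstantSign

section Companion

variable {R : Type*} [CommRing R] {d : ℕ}

/-- The companion matrix of a monic polynomial `f` of degree `n`, with ones on the subdiagonal and
the negated coefficients of `f` in the last column. -/
noncomputable def companionMatrix (n : ℕ) (f : R[X]) : Matrix (Fin n) (Fin n) R :=
  of fun i j ↦ if (j : ℕ) + 1 = n then -f.coeff i else if (i : ℕ) = j + 1 then 1 else 0

theorem companionMatrix_col_castSucc (f : R[X]) (j : Fin d) :
    (companionMatrix (d + 1) f).col j.castSucc = Pi.single j.succ 1 := by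
  ext i
  simp [companionMatrix, Pi.single_apply, Fin.ext_iff, j.isLt.ne]

theorem companionMatrix_col_last (f : R[X]) :
    (companionMatrix (d + 1) f).col (Fin.last d) = fun i : Fin (d + 1) ↦ -f.coeff i := by
  ext i
  simp [companionMatrix]

/-- Polynomial coordinates on `R ^ (d + 1)`: the vector `v` is sent to
`(1 - X) ^ d * h ((1 + X) / (1 - X))`, where `h = ∑ k, v k * X ^ k`. -/
noncomputable def cayleyTransform (d : ℕ) : (Fin (d + 1) → R) →ₗ[R] R[X] :=
  Fintype.linearCombination R fun k : Fin (d + 1) ↦ (1 - X) ^ (d - k : ℕ) * (1 + X) ^ (k : ℕ)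

theorem cayleyTransform_apply (v : Fin (d + 1) → R) :
    cayleyTransform d v = ∑ k, C (v k) * ((1 - X) ^ (d - k : ℕ) * (1 + X) ^ (k : ℕ)) := by
  simp [cayleyTransform, Fintype.linearCombination_apply, smul_eq_C_mul]

theorem cayleyTransform_single (k : Fin (d + 1)) :
    cayleyTransform d (Pi.single k (1 : R)) = (1 - X) ^ (d - k : ℕ) * (1 + X) ^ (k : ℕ) := by
  simp [cayleyTransform]

theorem natDegree_cayleyTransform_lt (v : Fin (d + 1) → R) :
    (cayleyTransform d v).natDegree < d + 1 := by
  rw [Nat.lt_succ_iff, cayleyTransform_apply]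
  refine natDegree_sum_le_of_forall_le _ _ fun k _ ↦ (natDegree_C_mul_le _ _).trans ?_
  compute_degree
  lia

theorem eval_one_cayleyTransform (v : Fin (d + 1) → R) :
    (cayleyTransform d v).eval 1 = 2 ^ d * v (Fin.last d) := by
  rw [cayleyTransform_apply, eval_finsetSum, Fin.sum_univ_castSucc, Finset.sum_eq_zero]
  · simp [one_add_one_eq_two, mul_comm]
  · intro k _
    simp [Nat.sub_ne_zero_of_lt k.isLt]

theorem one_sub_X_mul_cayleyTransform (v : Fin (d + 1) → R) :
    (1 - X) * cayleyTransform d v =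
      ∑ k, C (v k) * ((1 - X) ^ (d + 1 - k : ℕ) * (1 + X) ^ (k : ℕ)) := by
  rw [cayleyTransform_apply, Finset.mul_sum]
  refine Finset.sum_congr rfl fun k _ ↦ ?_
  rw [Nat.succ_sub k.is_le, pow_succ]
  ring

theorem one_add_X_mul_cayleyTransform_single (j : Fin d) :
    (1 + X) * cayleyTransform d (Pi.single j.castSucc (1 : R)) =
      (1 - X) * cayleyTransform d (Pi.single j.succ (1 : R)) := by
  have hexp : d - j = d - (j + 1) + 1 := by lia
  rw [cayleyTransform_single, cayleyTransform_single, Fin.val_castSucc, Fin.val_succ, hexp]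
  ring

theorem one_sub_X_mul_cayleyTransform_companionMatrix {f : R[X]} (hf : f.coeff (d + 1) = 1)
    (v : Fin (d + 1) → R) :
    (1 - X) * cayleyTransform d (companionMatrix (d + 1) f *ᵥ v) =
      (1 + X) * cayleyTransform d v - C (v (Fin.last d)) *
        ∑ k ∈ Finset.range (d + 2), C (f.coeff k) * ((1 - X) ^ (d + 1 - k) * (1 + X) ^ k) := by
  suffices LinearMap.mulLeft R (1 - X) ∘ₗ cayleyTransform d ∘ₗ
      (companionMatrix (d + 1) f).mulVecLin = LinearMap.mulLeft R (1 + X) ∘ₗ cayleyTransform d -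
        (LinearMap.proj (Fin.last d)).smulRight (∑ k ∈ Finset.range (d + 2),
          C (f.coeff k) * ((1 - X) ^ (d + 1 - k) * (1 + X) ^ k)) by
    simpa [smul_eq_C_mul] using LinearMap.congr_fun this v
  refine LinearMap.pi_ext' fun j ↦ LinearMap.ext_ring ?_
  simp only [LinearMap.comp_apply, LinearMap.single_apply, mulVecLin_apply, mulVec_single_one,
    LinearMap.sub_apply, LinearMap.smulRight_apply, LinearMap.mulLeft_apply, LinearMap.proj_apply]
  cases j using Fin.lastCases with
  | cast j =>
    simp [companionMatrix_col_castSucc, one_add_X_mul_cayleyTransform_single]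
  | last =>
    rw [companionMatrix_col_last, one_sub_X_mul_cayleyTransform, cayleyTransform_single,
      Finset.sum_range_succ, hf, Finset.sum_range]
    simp [pow_succ']

theorem sum_coeff_X_add_C_pow_mul (n : ℕ) (a : R) :
    ∑ k ∈ Finset.range (n + 1),
        C (((X + C a) ^ n : R[X]).coeff k) * ((1 - X) ^ (n - k) * (1 + X) ^ k) =
      (1 + X + C a * (1 - X)) ^ n := by
  rw [add_pow (1 + X : R[X])]
  refine Finset.sum_congr rfl fun k _ ↦ ?_
  simp only [coeff_X_add_C_pow, mul_pow, C_mul, C_pow, map_natCast]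
  ring

theorem one_sub_X_mul_cayleyTransform_companionMatrix_X_add_C_pow (a : R) (v : Fin (d + 1) → R) :
    (1 - X) * cayleyTransform d (companionMatrix (d + 1) ((X + C a) ^ (d + 1)) *ᵥ v) =
      (1 + X) * cayleyTransform d v -
        C (v (Fin.last d)) * (1 + X + C a * (1 - X)) ^ (d + 1) := by
  rw [one_sub_X_mul_cayleyTransform_companionMatrix (by simp [coeff_X_add_C_pow]),
    sum_coeff_X_add_C_pow_mul]

theorem cayleyRel_companionMatrix_X_add_one_pow (v : Fin (d + 1) → R) :
    CayleyRel (cayleyTransform d v)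
      (cayleyTransform d (companionMatrix (d + 1) ((X + 1) ^ (d + 1)) *ᵥ v)) := by
  have h := one_sub_X_mul_cayleyTransform_companionMatrix_X_add_C_pow 1 v
  rw [C_1] at h
  unfold CayleyRel
  rw [h, eval_one_cayleyTransform]
  simp only [C_mul, C_pow, C_ofNat]
  ring

theorem one_sub_X_mul_cayleyTransform_companionMatrix_X_sub_one_pow (v : Fin (d + 1) → R) :
    (1 - X) * cayleyTransform d (companionMatrix (d + 1) ((X - 1) ^ (d + 1)) *ᵥ v) =
      (1 + X) * cayleyTransform d v - C (2 * (cayleyTransform d v).eval 1) * X ^ (d + 1) := by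
  have h := one_sub_X_mul_cayleyTransform_companionMatrix_X_add_C_pow (-1) v
  rw [C_neg, C_1, ← sub_eq_add_neg] at h
  rw [h, eval_one_cayleyTransform]
  simp only [C_mul, C_pow, C_ofNat]
  ring

theorem companionF_eq_companionMatrix : companionF = companionMatrix 6 ((X - 1) ^ 6) := by
  have hX : (X - 1 : ℤ[X]) = X + C (-1) := by rw [C_neg, C_1, sub_eq_add_neg]
  ext i j
  simp only [companionF, companionMatrix, hX, coeff_X_add_C_pow, of_apply]
  revert i j
  decide

theorem companionG_eq_companionMatrix : companionG = companionMatrix 6 ((X + 1) ^ 6) := by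
  have hX : (X + 1 : ℤ[X]) = X + C 1 := by rw [C_1]
  ext i j
  simp only [companionG, companionMatrix, hX, coeff_X_add_C_pow, of_apply]
  revert i j
  decide

end Companion

section Hypergeometric

variable {R : Type*} [CommRing R] {d : ℕ} {A B : GL (Fin (d + 1)) R}

theorem cayleyRel_smul (hB : B.val = companionMatrix (d + 1) ((X + 1) ^ (d + 1)))
    (v : Fin (d + 1) → R) :
    CayleyRel (cayleyTransform d v) (cayleyTransform d (B • v)) := by
  rw [Units.smul_def, Matrix.smul_eq_mulVec, hB]
  exact cayleyRel_companionMatrix_X_add_one_pow v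

theorem cayleyTransform_inv_mul_smul [IsDomain R] (hd : Odd d)
    (hA : A.val = companionMatrix (d + 1) ((X - 1) ^ (d + 1)))
    (hB : B.val = companionMatrix (d + 1) ((X + 1) ^ (d + 1))) (v : Fin (d + 1) → R) :
    cayleyTransform d ((A⁻¹ * B) • v) = cayleyTransform d v -
      C (2 * (cayleyTransform d v).eval 1) * ∑ i ∈ Finset.range (d + 1), (-X) ^ i := by
  refine (cayleyRel_smul hB v).eq_sub_neg_geom_sum hd.add_one ?_
  have hBv : B • v = companionMatrix (d + 1) ((X - 1) ^ (d + 1)) *ᵥ ((A⁻¹ * B) • v) := by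
    rw [← hA, ← Matrix.smul_eq_mulVec, ← Units.smul_def, smul_smul, mul_inv_cancel_left]
  rw [hBv, one_sub_X_mul_cayleyTransform_companionMatrix_X_sub_one_pow]

theorem cayleyTransform_inv_mul_zpow_smul [IsDomain R] (hd : Odd d)
    (hA : A.val = companionMatrix (d + 1) ((X - 1) ^ (d + 1)))
    (hB : B.val = companionMatrix (d + 1) ((X + 1) ^ (d + 1))) (m : ℤ) (v : Fin (d + 1) → R) :
    cayleyTransform d ((A⁻¹ * B) ^ m • v) = cayleyTransform d v -
      C (m * (2 * (cayleyTransform d v).eval 1)) * ∑ i ∈ Finset.range (d + 1), (-X) ^ i := by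
  have hT := cayleyTransform_inv_mul_smul hd hA hB
  rw [map_zpow_smul_of_map_smul (f := cayleyTransform d)
    (c := fun v ↦ -(C (2 * (cayleyTransform d v).eval 1) * ∑ i ∈ Finset.range (d + 1), (-X) ^ i))
    (fun v ↦ by rw [hT, sub_eq_add_neg])
    (fun v ↦ by rw [hT, eval_one_sub_C_mul_neg_geom_sum hd.add_one])]
  simp [mul_assoc, sub_eq_add_neg]

variable [LinearOrder R] [IsStrictOrderedRing R]

theorem hasConstantSign_inv_mul_zpow_smul (hd : Odd d)
    (hA : A.val = companionMatrix (d + 1) ((X - 1) ^ (d + 1)))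
    (hB : B.val = companionMatrix (d + 1) ((X + 1) ^ (d + 1))) {v : Fin (d + 1) → R}
    (hv : HasConstantSign (d + 1) (cayleyTransform d v) ∨
      HasConstantSign (d + 1) ((cayleyTransform d (B • v)).comp (-X))) {m : ℤ} (hm : m ≠ 0) :
    HasConstantSign (d + 1) (cayleyTransform d (B • (A⁻¹ * B) ^ m • v)) ∧
      HasConstantSign (d + 1) ((cayleyTransform d ((A⁻¹ * B) ^ m • v)).comp (-X)) := by
  have hrel := cayleyRel_smul hB v
  set c := 2 * (cayleyTransform d v).eval 1
  have hlt {k : ℕ} (hk : k < d + 1) : |(cayleyTransform d v).coeff k| < |c| ∧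
      |(cayleyTransform d (B • v)).coeff k| < |c| := by
    rcases hv with hv | hv
    · exact hrel.abs_coeff_lt (natDegree_cayleyTransform_lt _) hv hk
    · exact hrel.abs_coeff_lt_of_comp_neg_X (natDegree_cayleyTransform_lt _) hv hk
  have hle : |c| ≤ |m * c| := by
    have hm' : (1 : R) ≤ |(m : R)| := mod_cast Int.one_le_abs hm
    rw [abs_mul (m : R) c]
    exact le_mul_of_one_le_left (abs_nonneg c) hm'
  have hT := cayleyTransform_inv_mul_zpow_smul hd hA hB m v
  constructor
  · have hrel' := cayleyRel_smul hB ((A⁻¹ * B) ^ m • v)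
    rw [hT] at hrel'
    rw [hrel.eq_sub_geom_sum hd.add_one hrel']
    exact hasConstantSign_sub_geom_sum fun k hk ↦ (hlt hk).2.trans_le hle
  · rw [hT, sub_C_mul_neg_geom_sum_comp_neg_X]
    refine hasConstantSign_sub_geom_sum fun k hk ↦ ?_
    rw [coeff_comp_neg_X, abs_mul, abs_neg_one_pow, one_mul]
    exact (hlt hk).1.trans_le hle

theorem freeGroup_lift_inv_mul_injective (hd : Odd d)
    (hA : A.val = companionMatrix (d + 1) ((X - 1) ^ (d + 1)))
    (hB : B.val = companionMatrix (d + 1) ((X + 1) ^ (d + 1))) :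
    Function.Injective (FreeGroup.lift ![A⁻¹ * B, B]) := by
  refine freeGroup_lift_injective_of_mapsTo
    (P := {v : Fin (d + 1) → R | HasConstantSign (d + 1) (cayleyTransform d v)})
    (Q := {v : Fin (d + 1) → R | HasConstantSign (d + 1) ((cayleyTransform d v).comp (-X))})
    ?_ ?_ ?_ ?_ ?_
  · refine ⟨Pi.single (Fin.last d) 1, ?_⟩
    simpa [cayleyTransform_single] using hasConstantSign_one_add_X_pow (R := R) d
  · exact Set.disjoint_left.2 fun v (hv : HasConstantSign _ _) ↦
      hv.not_comp_neg_X (Nat.succ_le_succ hd.pos)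
  · exact fun v hv ↦ (cayleyRel_smul hB v).hasConstantSign (natDegree_cayleyTransform_lt v) hv
  · intro v hv
    have hrel := cayleyRel_smul hB (B⁻¹ • v)
    rw [smul_inv_smul] at hrel
    refine hrel.comp_neg_X.hasConstantSign ?_ hv
    rw [natDegree_comp_neg_X]
    exact natDegree_cayleyTransform_lt v
  · exact fun v hv m hm ↦ hasConstantSign_inv_mul_zpow_smul hd hA hB hv hm

theorem freeGroup_lift_inv_mul_inv_mul_mul_injective (hd : Odd d)
    (hA : A.val = companionMatrix (d + 1) ((X - 1) ^ (d + 1)))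
    (hB : B.val = companionMatrix (d + 1) ((X + 1) ^ (d + 1))) :
    Function.Injective (FreeGroup.lift ![A⁻¹ * B, A⁻¹ * B * A]) := by
  have hconj : ![A⁻¹ * B, A⁻¹ * B * A] =
      fun i ↦ A⁻¹ * B * ![A⁻¹ * B, B] i * (A⁻¹ * B)⁻¹ := by
    ext i : 1
    fin_cases i <;> simp [mul_assoc]
  rw [hconj]
  exact freeGroup_lift_conj_injective (freeGroup_lift_inv_mul_injective hd hA hB) (A⁻¹ * B)

end Hypergeometric

theorem hypergeometric_free_of_rank_two_general {R : Type*} [CommRing R] [LinearOrder R]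
    [IsStrictOrderedRing R] {d : ℕ} (hd : Odd d) (A B : GL (Fin (d + 1)) R)
    (hA : A.val = companionMatrix (d + 1) ((X - 1) ^ (d + 1)))
    (hB : B.val = companionMatrix (d + 1) ((X + 1) ^ (d + 1))) :
    ¬ IsOfFinOrder (A⁻¹ * B) ∧ ¬ IsOfFinOrder (A⁻¹ * B * A) ∧
    Subgroup.closure {A, B} = Subgroup.closure {A⁻¹ * B, A⁻¹ * B * A} ∧
    Function.Injective
      (Monoid.Coprod.lift (Subgroup.zpowers (A⁻¹ * B)).subtype
        (Subgroup.zpowers (A⁻¹ * B * A)).subtype) ∧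
    (Monoid.Coprod.lift (Subgroup.zpowers (A⁻¹ * B)).subtype
        (Subgroup.zpowers (A⁻¹ * B * A)).subtype).range = Subgroup.closure {A, B} ∧
    Nonempty ((Subgroup.closure {A, B} : Subgroup (GL (Fin (d + 1)) R)) ≃* FreeGroup (Fin 2)) := by
  have hfree := freeGroup_lift_inv_mul_inv_mul_mul_injective hd hA hB
  rw [closure_pair_eq_closure_inv_mul]
  exact ⟨not_isOfFinOrder_of_freeGroup_lift_injective hfree 0,
    not_isOfFinOrder_of_freeGroup_lift_injective hfree 1, rfl,
    coprod_lift_zpowers_injective hfree, range_coprod_lift_zpowers _ _,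
    nonempty_closure_pair_mulEquiv_freeGroup hfree⟩

/-- The hypergeometric group with `α = (0,0,0,0,0,0)`, `β = (1/2,1/2,1/2,1/2,1/2,1/2)` is
free of rank two: `t = A⁻¹B` and `r = A⁻¹BA` have infinite order, generate the group
generated by `A` and `B`, and the group is the internal free product of `⟨t⟩` and `⟨r⟩`;
in particular it is isomorphic to `ℤ * ℤ`, the free group of rank `2`. -/
theorem hypergeometric_free_of_rank_two
    (A B : GL (Fin 6) ℤ)
    (hA : (A : Matrix (Fin 6) (Fin 6) ℤ) = companionF)
    (hB : (B : Matrix (Fin 6) (Fin 6) ℤ) = companionG) :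
    ¬ IsOfFinOrder (A⁻¹ * B) ∧ ¬ IsOfFinOrder (A⁻¹ * B * A) ∧
    Subgroup.closure {A, B} = Subgroup.closure {A⁻¹ * B, A⁻¹ * B * A} ∧
    Function.Injective
      (Monoid.Coprod.lift (Subgroup.zpowers (A⁻¹ * B)).subtype
        (Subgroup.zpowers (A⁻¹ * B * A)).subtype) ∧
    (Monoid.Coprod.lift (Subgroup.zpowers (A⁻¹ * B)).subtype
        (Subgroup.zpowers (A⁻¹ * B * A)).subtype).range = Subgroup.closure {A, B} ∧
    Nonempty ((Subgroup.closure {A, B} : Subgroup (GL (Fin 6) ℤ)) ≃* FreeGroup (Fin 2)) := by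
  exact hypergeometric_free_of_rank_two_general (d := 5) (by decide) A B
    (hA.trans companionF_eq_companionMatrix) (hB.trans companionG_eq_companionMatrix)
end

section
/- For all integers a, d, c and every natural number j, H(T⁻¹R)ʲ = (TR⁻¹)ʲH; in particular H·Uʲ = (T U⁻¹ T⁻¹)ʲ·H, since T⁻¹R = U. -/
open Matrix

/-- The matrix `U` depending on the integers `a`, `d`, `c`. -/
def Umat (a d c : ℤ) : Matrix (Fin 6) (Fin 6) ℤ :=
  !![1,1,0,0,0,0; 0,1,1,0,0,0; 0,0,1,0,0,0; -a,-a,0,1,0,0; 0,d,d,-1,1,0; 0,0,-c,1,-1,1]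

/-- The matrix `T`: the identity with an extra `1` in position `(3,6)` (i.e. row 3, column 6). -/
def Tmat : Matrix (Fin 6) (Fin 6) ℤ :=
  !![1,0,0,0,0,0; 0,1,0,0,0,0; 0,0,1,0,0,1; 0,0,0,1,0,0; 0,0,0,0,1,0; 0,0,0,0,0,1]

/-- The involutive matrix `H` (depending on `d`). -/
def Hmat (d : ℤ) : Matrix (Fin 6) (Fin 6) ℤ :=
  !![1,1,0,0,0,0; 0,-1,0,0,0,0; 0,0,1,0,0,-1; 0,0,0,-1,0,0; 0,-d,0,-1,1,0; 0,0,0,0,0,-1]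

/-! The matrix `K = T⁻¹ H` is an involution satisfying `U K U = K`, that is, it conjugates `U` to
`U⁻¹`. Since `T` conjugates `U⁻¹` to `T U⁻¹ T⁻¹`, the product `H = T K` conjugates `U` to
`T U⁻¹ T⁻¹`, and hence every power of the former to the same power of the latter. -/

theorem isUnit_of_mul_mul_self_eq {M : Type*} [Monoid M] {a b : M} (hb : IsUnit b)
    (h : a * b * a = b) : IsUnit a := by
  obtain ⟨u, rfl⟩ := hb
  have hright : a * (u * a * ↑u⁻¹) = 1 := by
    rw [← mul_assoc, ← mul_assoc, h, u.mul_inv]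
  have hleft : ↑u⁻¹ * a * u * a = 1 := by
    rw [mul_assoc (↑u⁻¹ : M), mul_assoc (↑u⁻¹ : M), h, u.inv_mul]
  exact isUnit_iff_exists_and_exists.mpr ⟨⟨_, hright⟩, ⟨_, hleft⟩⟩

section Matrix

variable {n R : Type*} [Fintype n] [DecidableEq n] [CommRing R]

theorem semiconjBy_inv_of_mul_mul_self_eq {A B : Matrix n n R} (hA : IsUnit A)
    (h : A * B * A = B) : SemiconjBy B A A⁻¹ :=
  calc B * A = A⁻¹ * (A * (B * A)) :=
        (nonsing_inv_mul_cancel_left A (B * A) ((isUnit_iff_isUnit_det A).mp hA)).symm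
    _ = A⁻¹ * B := by rw [← mul_assoc A, h]

theorem semiconjBy_mul_mul_inv {P : Matrix n n R} (hP : IsUnit P) (A : Matrix n n R) :
    SemiconjBy P A (P * A * P⁻¹) :=
  (nonsing_inv_mul_cancel_right P (P * A) ((isUnit_iff_isUnit_det P).mp hP)).symm

end Matrix

/-- The involution `K = T⁻¹ H`, which conjugates `U` to its inverse. It is written out in
coordinates, so that the identities defining its role involve no matrix inverse. -/
def Kmat (d : ℤ) : Matrix (Fin 6) (Fin 6) ℤ :=
  !![1,1,0,0,0,0; 0,-1,0,0,0,0; 0,0,1,0,0,0; 0,0,0,-1,0,0; 0,-d,0,-1,1,0; 0,0,0,0,0,-1]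

theorem Kmat_mul_self (d : ℤ) : Kmat d * Kmat d = 1 := by
  ext i j
  fin_cases i <;> fin_cases j <;> simp [Kmat, mul_apply, Fin.sum_univ_succ]

theorem Tmat_mul_Kmat (d : ℤ) : Tmat * Kmat d = Hmat d := by
  simp [Tmat, Kmat, Hmat]

theorem Umat_mul_Kmat_mul_Umat (a d c : ℤ) : Umat a d c * Kmat d * Umat a d c = Kmat d := by
  simp [Umat, Kmat]

theorem isUnit_Tmat : IsUnit Tmat := by
  rw [isUnit_iff_isUnit_det]
  simp [Tmat, det_succ_row_zero, Fin.sum_univ_succ]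

theorem isUnit_Umat (a d c : ℤ) : IsUnit (Umat a d c) :=
  isUnit_of_mul_mul_self_eq (.of_mul_eq_one _ (Kmat_mul_self d)) (Umat_mul_Kmat_mul_Umat a d c)

theorem semiconjBy_Hmat (a d c : ℤ) :
    SemiconjBy (Hmat d) (Umat a d c) (Tmat * (Umat a d c)⁻¹ * Tmat⁻¹) := by
  rw [← Tmat_mul_Kmat]
  exact (semiconjBy_mul_mul_inv isUnit_Tmat _).mul_left
    (semiconjBy_inv_of_mul_mul_self_eq (isUnit_Umat a d c) (Umat_mul_Kmat_mul_Umat a d c))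

/-- For all integers `a, d, c` and every natural number `j`, with `R = T·U`:
`H (T⁻¹R)ʲ = (TR⁻¹)ʲ H`; in particular `H Uʲ = (T U⁻¹ T⁻¹)ʲ H`, since `T⁻¹R = U`. -/
theorem H_conjugation_powers (a d c : ℤ) (j : ℕ) :
    Hmat d * (Tmat⁻¹ * (Tmat * Umat a d c)) ^ j
      = (Tmat * (Tmat * Umat a d c)⁻¹) ^ j * Hmat d ∧
    Hmat d * (Umat a d c) ^ j
      = (Tmat * (Umat a d c)⁻¹ * Tmat⁻¹) ^ j * Hmat d := by
  have hTR : Tmat⁻¹ * (Tmat * Umat a d c) = Umat a d c :=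
    nonsing_inv_mul_cancel_left Tmat _ ((isUnit_iff_isUnit_det Tmat).mp isUnit_Tmat)
  have hRT : Tmat * (Tmat * Umat a d c)⁻¹ = Tmat * (Umat a d c)⁻¹ * Tmat⁻¹ := by
    rw [Matrix.mul_inv_rev, mul_assoc]
  have hpow := (semiconjBy_Hmat a d c).pow_right j
  rw [hTR, hRT]
  exact ⟨hpow, hpow⟩
end

section
/- For each of the seven triples (a,d,c) ∈ {(64,48,12), (48,40,11), (32,32,10), (16,29,9), (36,33,10), (24,26,9), (20,25,9)}, if m and n are integers with Rᵐ = Tⁿ, then m = n = 0; consequently the cyclic subgroups ⟨T⟩ and ⟨R⟩ of GL(6,ℤ) intersect trivially and are both infinite cyclic (in particular Rᵐ ≠ I for every nonzero integer m). -/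
open Matrix

/-!
If `Rᵐ = Tⁿ`, then `Tⁿ` commutes with `R`; as `Tⁿ` is a transvection, this forces `n = 0`, so it
remains to show that `R` has infinite order. The characteristic polynomial of `R` is the palindrome
`(x-1)⁶ + c x(x-1)⁴ + d x²(x-1)² + a x³`, of which `-1` is at least a double root as soon as it is
a root, that is, when `a = 4(d - 4c + 16)`. In that case `R` has a nontrivial Jordan block at `-1`.
Of the seven triples only `(16,29,9)` is not of this form; for it, `tr R² = -7` is too large to be
a sum of six roots of unity.
-/

section Group

variable {G : Type*} [Group G] {r t : G}

lemma eq_zero_and_eq_zero_of_zpow_eq_zpow (hr : ¬ IsOfFinOrder r)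
    (hcomm : ∀ n : ℤ, Commute r (t ^ n) → n = 0) {m n : ℤ} (h : r ^ m = t ^ n) :
    m = 0 ∧ n = 0 := by
  obtain rfl : n = 0 := hcomm n (h ▸ Commute.self_zpow r m)
  refine ⟨injective_zpow_iff_not_isOfFinOrder.mpr hr ?_, rfl⟩
  simpa only [zpow_zero] using h

lemma zpowers_inf_zpowers_eq_bot (h : ∀ m n : ℤ, r ^ m = t ^ n → n = 0) :
    Subgroup.zpowers t ⊓ Subgroup.zpowers r = ⊥ := by
  rw [eq_bot_iff]
  rintro _ ⟨⟨n, rfl⟩, m, hm⟩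
  simp [h m n hm]

end Group

section Transvection

variable {ι R : Type*} [Fintype ι] [DecidableEq ι] [CommRing R] {i j : ι}

lemma coe_zpow_eq_transvection (hij : i ≠ j) {T : GL ι R} {x : R}
    (hT : (T : Matrix ι ι R) = transvection i j x) (n : ℤ) :
    ((T ^ n : GL ι R) : Matrix ι ι R) = transvection i j (n * x) := by
  have coe_pow (k : ℕ) : ((T ^ k : GL ι R) : Matrix ι ι R) = transvection i j (k * x) := by
    induction k with
    | zero => simp
    | succ k ih =>
      rw [pow_succ, Units.val_mul, ih, hT, transvection_mul_transvection_same _ _ hij]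
      push_cast
      rw [add_one_mul]
  obtain ⟨k, rfl | rfl⟩ := n.eq_nat_or_neg
  · simpa using coe_pow k
  · rw [_root_.zpow_neg, zpow_natCast]
    refine Units.inv_eq_of_mul_eq_one_right ?_
    rw [coe_pow, transvection_mul_transvection_same _ _ hij]
    simp

lemma apply_mul_eq_zero_of_commute_transvection {M : Matrix ι ι R} {x : R}
    (h : Commute M (transvection i j x)) {k : ι} (hk : k ≠ i) : M k i * x = 0 := by
  have hentry := congrFun₂ h.eq k j
  rw [mul_transvection_apply_same, transvection_mul_apply_of_ne _ _ _ _ hk] at hentry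
  rw [mul_comm]
  simpa using hentry

end Transvection

section JordanBlock

variable {R M : Type*} [CommRing R] [AddCommGroup M] [Module R M] {f : Module.End R M} {μ : R}
  {v w : M}

lemma pow_succ_apply_of_apply_eq_smul_add (hv : f v = μ • v + w) (hw : f w = μ • w) (k : ℕ) :
    (f ^ (k + 1)) v = μ ^ (k + 1) • v + ((k + 1) * μ ^ k) • w := by
  induction k with
  | zero => simp [hv]
  | succ k ih =>
    rw [pow_succ', Module.End.mul_apply, ih, map_add, map_smul, map_smul, hv, hw]
    push_cast
    module

lemma not_isOfFinOrder_of_apply_eq_smul_add [IsDomain R] [CharZero R] [Module.IsTorsionFree R M]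
    (hv : f v = μ • v + w) (hw : f w = μ • w) (hw₀ : w ≠ 0) : ¬ IsOfFinOrder f := by
  intro hf
  obtain ⟨k, hk, hfk⟩ := isOfFinOrder_iff_pow_eq_one.mp hf
  obtain ⟨k, rfl⟩ := Nat.exists_eq_add_one.mpr hk
  have hμ : μ ^ (k + 1) = 1 := by
    have hw_eig : f.HasEigenvector μ w := ⟨Module.End.mem_eigenspace_iff.mpr hw, hw₀⟩
    have hw_fixed : μ ^ (k + 1) • w = w := by
      rw [← hw_eig.pow_apply, hfk, Module.End.one_apply]
    exact smul_left_injective R hw₀ (by simpa only [one_smul] using hw_fixed)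
  have hcoeff : ((k + 1) * μ ^ k : R) • w = 0 := by
    have hv_pow := pow_succ_apply_of_apply_eq_smul_add hv hw k
    rwa [hfk, hμ, one_smul, Module.End.one_apply, left_eq_add] at hv_pow
  have hμk : μ ^ k ≠ 0 := fun h ↦ by simp [pow_succ, h] at hμ
  exact mul_ne_zero (Nat.cast_add_one_ne_zero k) hμk ((smul_eq_zero_iff_left hw₀).mp hcoeff)

lemma not_isOfFinOrder_of_mulVec_eq_smul_add {ι : Type*} [Fintype ι] [DecidableEq ι] [IsDomain R]
    [CharZero R] {A : Matrix ι ι R} {v w : ι → R} (hv : A *ᵥ v = μ • v + w) (hw : A *ᵥ w = μ • w)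
    (hw₀ : w ≠ 0) : ¬ IsOfFinOrder A := by
  intro hA
  let toEnd : Matrix ι ι R →* Module.End R (ι → R) := toLinAlgEquiv' (R := R) (n := ι)
  exact not_isOfFinOrder_of_apply_eq_smul_add hv hw hw₀ (toEnd.isOfFinOrder hA)

end JordanBlock

section Trace

lemma isOfFinOrder_of_mem_spectrum {𝕜 A : Type*} [Field 𝕜] [Ring A] [Algebra 𝕜 A] {x : A}
    (hx : IsOfFinOrder x) {z : 𝕜} (hz : z ∈ spectrum 𝕜 x) : IsOfFinOrder z := by
  rcases subsingleton_or_nontrivial A with _ | _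
  · simp [spectrum.of_subsingleton] at hz
  obtain ⟨k, hk, hxk⟩ := isOfFinOrder_iff_pow_eq_one.mp hx
  have hzk : z ^ k ∈ spectrum 𝕜 (x ^ k) := spectrum.pow_mem_pow x k hz
  rw [hxk, spectrum.one_eq, Set.mem_singleton_iff] at hzk
  exact isOfFinOrder_iff_pow_eq_one.mpr ⟨k, hk, hzk⟩

variable {ι : Type*} [Fintype ι] [DecidableEq ι]

lemma norm_trace_le_card_of_isOfFinOrder {M : Matrix ι ι ℂ} (hM : IsOfFinOrder M) :
    ‖M.trace‖ ≤ Fintype.card ι := by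
  have norm_root (z : ℂ) (hz : z ∈ M.charpoly.roots) : ‖z‖ = 1 :=
    (isOfFinOrder_of_mem_spectrum hM <|
      mem_spectrum_iff_isRoot_charpoly.mpr (Polynomial.isRoot_of_mem_roots hz)).norm_eq_one
  calc ‖M.trace‖ = ‖M.charpoly.roots.sum‖ := by rw [trace_eq_sum_roots_charpoly]
    _ ≤ (M.charpoly.roots.map norm).sum := norm_multiset_sum_le _
    _ = M.charpoly.roots.card := by simp [Multiset.map_congr rfl norm_root]
    _ ≤ Fintype.card ι := by
      exact_mod_cast M.charpoly.card_roots'.trans_eq M.charpoly_natDegree_eq_dim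

lemma abs_trace_le_card_of_isOfFinOrder {M : Matrix ι ι ℤ} (hM : IsOfFinOrder M) :
    |M.trace| ≤ Fintype.card ι := by
  let toComplex : Matrix ι ι ℤ →+* Matrix ι ι ℂ := (Int.castRingHom ℂ).mapMatrix
  have hMℂ : IsOfFinOrder (toComplex M) := toComplex.toMonoidHom.isOfFinOrder hM
  have trace_map : (toComplex M).trace = (M.trace : ℂ) := by
    simp [toComplex, trace]
  have hnorm := norm_trace_le_card_of_isOfFinOrder hMℂ
  rw [trace_map, Complex.norm_intCast] at hnorm
  exact_mod_cast hnorm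

end Trace

lemma Tmat_eq_transvection : Tmat = transvection 2 5 1 := by
  decide +kernel

lemma Tmat_mul_Umat (a d c : ℤ) :
    Tmat * Umat a d c =
      !![1, 1, 0, 0, 0, 0; 0, 1, 1, 0, 0, 0; 0, 0, 1 - c, 1, -1, 1;
        -a, -a, 0, 1, 0, 0; 0, d, d, -1, 1, 0; 0, 0, -c, 1, -1, 1] := by
  ext i j
  fin_cases i <;> fin_cases j <;> simp [Tmat, Umat, mul_apply, Fin.sum_univ_succ, sub_eq_add_neg]

lemma trace_Tmat_mul_Umat_sq (a d c : ℤ) :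
    ((Tmat * Umat a d c) ^ 2).trace = c ^ 2 - 4 * c + 6 - 2 * d := by
  rw [Tmat_mul_Umat, pow_two]
  simp only [trace, diag_apply, mul_apply, Fin.sum_univ_six, of_apply, cons_val]
  ring

lemma not_isOfFinOrder_Tmat_mul_Umat_of_eq {a d c : ℤ} (h : a = 4 * (d - 4 * c + 16)) :
    ¬ IsOfFinOrder (Tmat * Umat a d c) := by
  obtain ⟨b, rfl⟩ : ∃ b, d = b + 4 * c - 16 := ⟨d - 4 * c + 16, by ring⟩
  obtain rfl : a = 4 * b := by linarith
  let v : Fin 6 → ℤ := ![0, 1, -4, b, b + 4 * c - 16, -4]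
  let w : Fin 6 → ℤ := ![1, -2, 4, -2 * b, 16 - 4 * c - 2 * b, 8]
  have hv : (Tmat * Umat (4 * b) (b + 4 * c - 16) c) *ᵥ v = (-1 : ℤ) • v + w := by
    rw [Tmat_mul_Umat]
    ext i
    fin_cases i <;> simp [v, w, mulVec, dotProduct, Fin.sum_univ_six] <;> ring
  have hw : (Tmat * Umat (4 * b) (b + 4 * c - 16) c) *ᵥ w = (-1 : ℤ) • w := by
    rw [Tmat_mul_Umat]
    ext i
    fin_cases i <;> simp [w, mulVec, dotProduct, Fin.sum_univ_six] <;> ring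
  have hw₀ : w ≠ 0 := fun h ↦ by simpa [w] using congrFun h 0
  exact not_isOfFinOrder_of_mulVec_eq_smul_add hv hw hw₀

lemma not_isOfFinOrder_Tmat_mul_Umat_of_lt_abs {a d c : ℤ}
    (h : 6 < |c ^ 2 - 4 * c + 6 - 2 * d|) : ¬ IsOfFinOrder (Tmat * Umat a d c) := by
  intro hR
  have htrace := abs_trace_le_card_of_isOfFinOrder (hR.pow (n := 2))
  rw [trace_Tmat_mul_Umat_sq, Fintype.card_fin] at htrace
  exact htrace.not_gt h

lemma eq_zero_of_commute_Tmat_zpow {a d c : ℤ} {U T : GL (Fin 6) ℤ}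
    (hU : (U : Matrix (Fin 6) (Fin 6) ℤ) = Umat a d c)
    (hT : (T : Matrix (Fin 6) (Fin 6) ℤ) = Tmat) {n : ℤ} (h : Commute (T * U) (T ^ n)) :
    n = 0 := by
  have hR : Commute (Tmat * Umat a d c) (transvection 2 5 n) := by
    have hTn := coe_zpow_eq_transvection (by decide) (hT.trans Tmat_eq_transvection) n
    simpa only [Units.val_mul, hT, hU, hTn, Int.cast_id, mul_one] using h.units_val
  simpa [Tmat_mul_Umat] using
    apply_mul_eq_zero_of_commute_transvection hR (show (1 : Fin 6) ≠ 2 by decide)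

theorem zpowers_T_R_trivial_intersection_general (a d c : ℤ)
    (h : a = 4 * (d - 4 * c + 16) ∨ 6 < |c ^ 2 - 4 * c + 6 - 2 * d|)
    (U T : GL (Fin 6) ℤ)
    (hU : (U : Matrix (Fin 6) (Fin 6) ℤ) = Umat a d c)
    (hT : (T : Matrix (Fin 6) (Fin 6) ℤ) = Tmat) :
    (∀ m n : ℤ, (T * U) ^ m = T ^ n → m = 0 ∧ n = 0) ∧
    Subgroup.zpowers T ⊓ Subgroup.zpowers (T * U) = ⊥ ∧
    ¬ IsOfFinOrder T ∧ ¬ IsOfFinOrder (T * U) ∧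
    ∀ m : ℤ, m ≠ 0 → (T * U) ^ m ≠ 1 := by
  have hR : ¬ IsOfFinOrder (T * U) := by
    rw [← Units.isOfFinOrder_val, Units.val_mul, hT, hU]
    exact h.elim not_isOfFinOrder_Tmat_mul_Umat_of_eq not_isOfFinOrder_Tmat_mul_Umat_of_lt_abs
  have main (m n : ℤ) (hmn : (T * U) ^ m = T ^ n) : m = 0 ∧ n = 0 :=
    eq_zero_and_eq_zero_of_zpow_eq_zpow hR (fun _ ↦ eq_zero_of_commute_Tmat_zpow hU hT) hmn
  refine ⟨main, zpowers_inf_zpowers_eq_bot fun m n hmn ↦ (main m n hmn).2, ?_, hR, ?_⟩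
  · intro hTfin
    obtain ⟨n, hn, hTn⟩ := isOfFinOrder_iff_zpow_eq_one.mp hTfin
    exact hn (main 0 n (by rw [zpow_zero, hTn])).2
  · exact fun m hm hRm ↦ hm (main m 0 (by rw [hRm, zpow_zero])).1

/-- For each of the seven triples `(a,d,c)` of Table 1, realizing `U` and `T` as
elements of `GL(6,ℤ)` and setting `R = T·U`: if `Rᵐ = Tⁿ` for integers `m, n`,
then `m = n = 0`; consequently the cyclic subgroups `⟨T⟩` and `⟨R⟩` intersect
trivially and are both infinite cyclic (in particular `Rᵐ ≠ I` for every
nonzero integer `m`). -/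
theorem zpowers_T_R_trivial_intersection (a d c : ℤ)
    (h : (a, d, c) ∈
      ({(64,48,12), (48,40,11), (32,32,10), (16,29,9), (36,33,10), (24,26,9), (20,25,9)} :
        Set (ℤ × ℤ × ℤ)))
    (U T : GL (Fin 6) ℤ)
    (hU : (U : Matrix (Fin 6) (Fin 6) ℤ) = Umat a d c)
    (hT : (T : Matrix (Fin 6) (Fin 6) ℤ) = Tmat) :
    (∀ m n : ℤ, (T * U) ^ m = T ^ n → m = 0 ∧ n = 0) ∧
    Subgroup.zpowers T ⊓ Subgroup.zpowers (T * U) = ⊥ ∧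
    ¬ IsOfFinOrder T ∧ ¬ IsOfFinOrder (T * U) ∧
    ∀ m : ℤ, m ≠ 0 → (T * U) ^ m ≠ 1 := by
  refine zpowers_T_R_trivial_intersection_general a d c ?_ U T hU hT
  rcases h with h | h | h | h | h | h | h <;> cases h <;> decide
end
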